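/- The operator 𝒟 := Σ_{γ∈Γ} D_γ T_γ is Fredholm on H if, and only if, the restriction of D̂ := Σ_{γ∈Γ} Q(D_γ⊗Id)Q(1⊗R_γ) to the closed subspace H_Γ^{T⊗L} of (T⊗L)-invariant vectors (which D̂ maps into itself) is Fredholm. -/

import Mathlib

open Finset

variable {Γ : Type*} [Group Γ] [Fintype Γ]
variable {H : Type*} [NormedAddCommGroup H] [InnerProductSpace ℂ H] [CompleteSpace H]

/-- The operator `1 ⊗ R_γ` on `H_Γ = {u : Γ → H}`: `((1 ⊗ R_γ) u)(γ') = u (γ' γ)`. -/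
def Rc (H : Type*) [NormedAddCommGroup H] [InnerProductSpace ℂ H]
    (γ : Γ) : (Γ → H) →L[ℂ] (Γ → H) :=
  ContinuousLinearMap.pi fun γ' => ContinuousLinearMap.proj (γ' * γ)

/-- The operator `T_γ ⊗ L_γ` on `H_Γ`: `((T_γ ⊗ L_γ) u)(γ') = T_γ (u (γ⁻¹ γ'))`. -/
def TLc (T : Γ →* (H ≃ₗᵢ[ℂ] H)) (γ : Γ) : (Γ → H) →L[ℂ] (Γ → H) :=
  ContinuousLinearMap.pi fun γ' =>
    ((T γ).toLinearIsometry.toContinuousLinearMap).comp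
      (ContinuousLinearMap.proj (γ⁻¹ * γ'))

/-- The operator `Q` on `H_Γ`: `(Q u)(γ') = T_{γ'} (u (γ'⁻¹))`. -/
def Qc (T : Γ →* (H ≃ₗᵢ[ℂ] H)) : (Γ → H) →L[ℂ] (Γ → H) :=
  ContinuousLinearMap.pi fun γ' =>
    ((T γ').toLinearIsometry.toContinuousLinearMap).comp
      (ContinuousLinearMap.proj γ'⁻¹)

/-- The operator `D ⊗ Id` on `H_Γ`: `((D ⊗ Id) u)(γ) = D (u γ)`. -/
def DtensorC (Γ : Type*) [Group Γ] [Fintype Γ]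
    (D : H →L[ℂ] H) : (Γ → H) →L[ℂ] (Γ → H) :=
  ContinuousLinearMap.pi fun γ => D.comp (ContinuousLinearMap.proj γ)

/-- The uniformized operator `D̂ = ∑_{γ ∈ Γ} Q (D_γ ⊗ Id) Q (1 ⊗ R_γ)` on `H_Γ`. -/
def DhatC (T : Γ →* (H ≃ₗᵢ[ℂ] H)) (D : Γ → (H →L[ℂ] H)) :
    (Γ → H) →L[ℂ] (Γ → H) :=
  ∑ γ : Γ, (Qc T).comp ((DtensorC Γ (D γ)).comp ((Qc T).comp (Rc H γ)))

/-- The `Γ`-operator `𝒟 = ∑_{γ ∈ Γ} D_γ T_γ` on `H`. -/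
def DopC (T : Γ →* (H ≃ₗᵢ[ℂ] H)) (D : Γ → (H →L[ℂ] H)) : H →L[ℂ] H :=
  ∑ γ : Γ, (D γ).comp ((T γ).toLinearIsometry.toContinuousLinearMap)

/-- The closed subspace `H_Γ^{T⊗L}` of `(T ⊗ L)`-invariant vectors of `H_Γ`. -/
def invSub (T : Γ →* (H ≃ₗᵢ[ℂ] H)) : Submodule ℂ (Γ → H) where
  carrier := {u : Γ → H | ∀ γ : Γ, TLc T γ u = u}
  add_mem' hu hv γ := by rw [map_add, hu γ, hv γ]
  zero_mem' γ := by rw [map_zero]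
  smul_mem' c u hu γ := by rw [map_smul, hu γ]

/-- A bounded operator between Hilbert spaces is Fredholm if it is invertible modulo
compact operators (Atkinson's theorem). -/
def IsFredholm {X Y : Type*} [NormedAddCommGroup X] [NormedSpace ℂ X]
    [NormedAddCommGroup Y] [NormedSpace ℂ Y] (A : X →L[ℂ] Y) : Prop :=
  ∃ S : Y →L[ℂ] X,
    IsCompactOperator ⇑(S.comp A - ContinuousLinearMap.id ℂ X) ∧
    IsCompactOperator ⇑(A.comp S - ContinuousLinearMap.id ℂ Y)

/-! A `(T ⊗ L)`-invariant vector `u` is determined by its value at `1`, since `u γ = T_γ (u 1)`.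
Hence `x ↦ (γ ↦ T_γ x)` is a topological isomorphism from `H` onto `H_Γ^{T⊗L}`. Under it the
factors `T_{γ'}⁻¹` and `T_{γ' γ}` in `D̂` cancel to `T_γ`, so it conjugates `𝒟` into the restriction
of `D̂`; being Fredholm is invariant under such a conjugation. -/

section Fredholm

variable {X X' Y Y' : Type*}
  [NormedAddCommGroup X] [NormedSpace ℂ X] [NormedAddCommGroup X'] [NormedSpace ℂ X']
  [NormedAddCommGroup Y] [NormedSpace ℂ Y] [NormedAddCommGroup Y'] [NormedSpace ℂ Y']

theorem IsFredholm.equiv_comp_equiv {A : X →L[ℂ] Y} (hA : IsFredholm A)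
    (e : Y ≃L[ℂ] Y') (f : X' ≃L[ℂ] X) :
    IsFredholm ((e : Y →L[ℂ] Y') ∘L A ∘L (f : X' →L[ℂ] X)) := by
  obtain ⟨S, hSA, hAS⟩ := hA
  let S' : Y' →L[ℂ] X' := f.symm ∘L S ∘L (e.symm : Y' →L[ℂ] Y)
  let A' : X' →L[ℂ] Y' := e ∘L A ∘L (f : X' →L[ℂ] X)
  have left_defect : S' ∘L A' - .id ℂ X' = f.symm ∘L (S ∘L A - .id ℂ X) ∘L (f : X' →L[ℂ] X) := by
    ext x
    simp [S', A']
  have right_defect : A' ∘L S' - .id ℂ Y' = e ∘L (A ∘L S - .id ℂ Y) ∘L (e.symm : Y' →L[ℂ] Y) := by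
    ext y
    simp [S', A']
  refine ⟨S', ?_, ?_⟩
  · rw [left_defect]
    exact (hSA.comp_clm (f : X' →L[ℂ] X)).clm_comp (f.symm : X →L[ℂ] X')
  · rw [right_defect]
    exact (hAS.comp_clm (e.symm : Y' →L[ℂ] Y)).clm_comp (e : Y →L[ℂ] Y')

theorem isFredholm_iff_of_intertwining {A : X →L[ℂ] Y} {B : X' →L[ℂ] Y'}
    (e : X ≃L[ℂ] X') (f : Y ≃L[ℂ] Y') (h : ∀ x, B (e x) = f (A x)) :
    IsFredholm A ↔ IsFredholm B := by
  have hB : B = (f : Y →L[ℂ] Y') ∘L A ∘L (e.symm : X' →L[ℂ] X) := by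
    ext x
    simp [← h]
  have hA : A = (f.symm : Y' →L[ℂ] Y) ∘L B ∘L (e : X →L[ℂ] X') := by
    ext x
    simp [h]
  constructor
  · intro hFredholm
    rw [hB]
    exact hFredholm.equiv_comp_equiv f e.symm
  · intro hFredholm
    rw [hA]
    exact hFredholm.equiv_comp_equiv f.symm e

end Fredholm

section Invariant

variable {G : Type*} [Group G] {V : Type*} [NormedAddCommGroup V] [InnerProductSpace ℂ V]

theorem unitaryRep_apply_apply (T : G →* (V ≃ₗᵢ[ℂ] V)) (g g' : G) (x : V) :
    T g (T g' x) = T (g * g') x := by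
  rw [map_mul, LinearIsometryEquiv.coe_mul, Function.comp_apply]

theorem TLc_apply (T : G →* (V ≃ₗᵢ[ℂ] V)) (g : G) (u : G → V) (g' : G) :
    TLc T g u g' = T g (u (g⁻¹ * g')) :=
  rfl

theorem mem_invSub_iff (T : G →* (V ≃ₗᵢ[ℂ] V)) (u : G → V) :
    u ∈ invSub T ↔ ∀ g, T g (u 1) = u g := by
  constructor
  · intro hu g
    simpa only [TLc_apply, inv_mul_cancel] using congrFun (hu g) g
  · intro hu g
    ext g'
    rw [TLc_apply, ← hu, unitaryRep_apply_apply, mul_inv_cancel_left, hu]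

/-- The orbit map `x ↦ (g ↦ T_g x)` of a unitary representation, as a continuous linear map into
the functions on the group. -/
def orbitMap (T : G →* (V ≃ₗᵢ[ℂ] V)) : V →L[ℂ] (G → V) :=
  ContinuousLinearMap.pi fun g => (T g).toLinearIsometry.toContinuousLinearMap

theorem orbitMap_apply (T : G →* (V ≃ₗᵢ[ℂ] V)) (x : V) (g : G) : orbitMap T x g = T g x :=
  rfl

theorem orbitMap_apply_one (T : G →* (V ≃ₗᵢ[ℂ] V)) (x : V) : orbitMap T x 1 = x := by
  rw [orbitMap_apply, map_one, LinearIsometryEquiv.coe_one, id_eq]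

theorem orbitMap_mem_invSub (T : G →* (V ≃ₗᵢ[ℂ] V)) (x : V) : orbitMap T x ∈ invSub T :=
  (mem_invSub_iff T _).2 fun g => by rw [orbitMap_apply_one, orbitMap_apply]

theorem orbitMap_eval_one_of_mem_invSub {T : G →* (V ≃ₗᵢ[ℂ] V)} {u : G → V}
    (hu : u ∈ invSub T) : orbitMap T (u 1) = u :=
  funext ((mem_invSub_iff T u).1 hu)

/-- The orbit map as a topological isomorphism onto the `(T ⊗ L)`-invariant functions; its inverse
is evaluation at `1`. -/
def invSubEquiv (T : G →* (V ≃ₗᵢ[ℂ] V)) : V ≃L[ℂ] invSub T :=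
  ContinuousLinearEquiv.equivOfInverse
    ((orbitMap T).codRestrict (invSub T) (orbitMap_mem_invSub T))
    ((ContinuousLinearMap.proj 1).comp (invSub T).subtypeL)
    (orbitMap_apply_one T)
    (fun u => Subtype.ext (orbitMap_eval_one_of_mem_invSub u.2))

end Invariant

section Uniformization

variable {G : Type*} [Group G] [Fintype G]
  {V : Type*} [NormedAddCommGroup V] [InnerProductSpace ℂ V]

theorem DopC_apply (T : G →* (V ≃ₗᵢ[ℂ] V)) (D : G → (V →L[ℂ] V)) (x : V) :
    DopC T D x = ∑ g, D g (T g x) := by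
  rw [DopC, _root_.sum_apply]
  rfl

theorem DhatC_apply (T : G →* (V ≃ₗᵢ[ℂ] V)) (D : G → (V →L[ℂ] V)) (u : G → V) (g' : G) :
    DhatC T D u g' = ∑ g, T g' (D g (T g'⁻¹ (u (g' * g)))) := by
  have summand_apply (g : G) :
      Qc T (DtensorC G (D g) (Qc T (Rc V g u))) g' = T g' (D g (T g'⁻¹ (u (g'⁻¹⁻¹ * g)))) :=
    rfl
  simp only [DhatC, _root_.sum_apply, Finset.sum_apply, ContinuousLinearMap.comp_apply,
    summand_apply, inv_inv]

theorem DhatC_orbitMap (T : G →* (V ≃ₗᵢ[ℂ] V)) (D : G → (V →L[ℂ] V)) (x : V) :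
    DhatC T D (orbitMap T x) = orbitMap T (DopC T D x) := by
  ext g'
  calc DhatC T D (orbitMap T x) g'
      = ∑ g, T g' (D g (T g'⁻¹ (T (g' * g) x))) := DhatC_apply T D _ g'
    _ = ∑ g, T g' (D g (T g x)) := by
        simp only [unitaryRep_apply_apply, inv_mul_cancel_left]
    _ = orbitMap T (DopC T D x) g' := by rw [orbitMap_apply, DopC_apply, map_sum]

theorem DhatC_mem_invSub (T : G →* (V ≃ₗᵢ[ℂ] V)) (D : G → (V →L[ℂ] V)) {u : G → V}
    (hu : u ∈ invSub T) : DhatC T D u ∈ invSub T := by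
  rw [← orbitMap_eval_one_of_mem_invSub hu, DhatC_orbitMap]
  exact orbitMap_mem_invSub T _

theorem isFredholm_Dop_iff_isFredholm_Dhat_restrict_general
    (T : G →* (V ≃ₗᵢ[ℂ] V)) (D : G → (V →L[ℂ] V)) :
    IsFredholm (DopC T D) ↔
      IsFredholm (ContinuousLinearMap.codRestrict
        ((DhatC T D).comp (invSub T).subtypeL) (invSub T)
        (fun u => DhatC_mem_invSub T D u.2)) :=
  isFredholm_iff_of_intertwining (invSubEquiv T) (invSubEquiv T) fun x =>
    Subtype.ext (DhatC_orbitMap T D x)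

end Uniformization

/-- The `Γ`-operator `𝒟 = ∑_γ D_γ T_γ` is Fredholm on `H` if, and only if, the
restriction of the uniformized operator `D̂ = ∑_γ Q (D_γ ⊗ Id) Q (1 ⊗ R_γ)` to the
closed subspace `H_Γ^{T⊗L}` of `(T ⊗ L)`-invariant vectors (which `D̂` maps into
itself, since it commutes with all `T_γ ⊗ L_γ`) is Fredholm. -/
theorem isFredholm_Dop_iff_isFredholm_Dhat_restrict
    (T : Γ →* (H ≃ₗᵢ[ℂ] H)) (D : Γ → (H →L[ℂ] H))
    (hinv : ∀ u ∈ invSub T, DhatC T D u ∈ invSub T) :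
    IsFredholm (DopC T D) ↔
      IsFredholm (ContinuousLinearMap.codRestrict
        ((DhatC T D).comp (invSub T).subtypeL) (invSub T)
        (fun u => hinv u.1 u.2)) :=
  isFredholm_Dop_iff_isFredholm_Dhat_restrict_general T D
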